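/- For every n ≥ 1, (n−1)^(n−1) = Σ over compositions I = (i₁,…,i_r) of n of [ (−1)^(r−1) · n!/(i₁!⋯i_r!) · ∏_{k=1}^{r} (i_k + 1)^(i_k − 1) ], where the left-hand side uses the convention 0^0 = 1 (the identity is an equality of integers). -/

import Mathlib

/-!
The Abel polynomials `Aₙ(x) = x (x + n) ^ (n - 1)`, with `A₀ = 1`, are of binomial type:
`Aₙ(x + y) = ∑ k, n.choose k * Aₖ(x) * Aₙ₋ₖ(y)`. As `Aₙ(0) = 0` for `n ≥ 1`, the exponential
generating functions of `Aₙ(x)` and `Aₙ(-x)` are inverse to each other, and expanding the inverse as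
a geometric series writes `Aₙ(-x)` as an alternating sum over the compositions of `n`. At `x = 1`
one has `Aᵢ(1) = (i + 1) ^ (i - 1)` and `-Aₙ(-1) = (n - 1) ^ (n - 1)`.

The binomial type property follows from Abel's identity
`∑ k, n.choose k * Aₖ(x) * (y + n - k) ^ (n - k) = (x + y + n) ^ n`: writing
`y + n - k = (x + y + n) - (x + k)` and expanding in powers of `x + y + n`, every coefficient except
the leading one is an `m`-th finite difference of a polynomial of degree `m - 1`.
-/

open Finset hiding mem_antidiagonal
open Finset.HasAntidiagonal (mem_antidiagonal)
open scoped Nat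

section AbelEval

variable {R : Type*} [Semiring R]

/-- The value `Aₙ(x) = x (x + n) ^ (n - 1)` at `x` of the `n`-th Abel polynomial (with parameter
`-1`), where `A₀ = 1`. -/
def abelEval : ℕ → R → R
  | 0, _ => 1
  | n + 1, x => x * (x + (n + 1 : ℕ)) ^ n

@[simp]
lemma abelEval_zero (x : R) : abelEval 0 x = 1 := rfl

lemma abelEval_succ (n : ℕ) (x : R) : abelEval (n + 1) x = x * (x + (n + 1 : ℕ)) ^ n := rfl

lemma abelEval_of_pos {n : ℕ} (hn : 0 < n) (x : R) : abelEval n x = x * (x + n) ^ (n - 1) := by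
  obtain ⟨m, rfl⟩ := Nat.exists_eq_add_one.2 hn
  rfl

lemma abelEval_mul_pow {k m n : ℕ} (h : k + m = n + 1) (x : R) :
    abelEval k x * (x + k) ^ m = x * (x + k) ^ n := by
  cases k with
  | zero =>
    obtain rfl : m = n + 1 := by omega
    simp [pow_succ']
  | succ k =>
    obtain rfl : n = k + m := by omega
    rw [abelEval_succ, pow_add, mul_assoc]

end AbelEval

section AntidiagonalSums

lemma sum_antidiagonal_antidiagonal_left_comm {A M : Type*} [AddCommMonoid A]
    [HasAntidiagonal A] [AddCommMonoid M] (n : A) (f : A → A → A → M) :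
    ∑ p ∈ antidiagonal n, ∑ q ∈ antidiagonal p.2, f p.1 q.1 q.2 =
      ∑ p ∈ antidiagonal n, ∑ q ∈ antidiagonal p.2, f q.1 p.1 q.2 := by
  rw [sum_sigma', sum_sigma']
  refine sum_nbij' (fun s => ⟨(s.2.1, s.1.1 + s.2.2), (s.1.1, s.2.2)⟩)
    (fun s => ⟨(s.2.1, s.1.1 + s.2.2), (s.1.1, s.2.2)⟩) ?_ ?_ ?_ ?_ ?_ <;>
  grind [mem_antidiagonal]

lemma choose_add_mul_choose_add_left_comm (i j k : ℕ) :
    (i + (j + k)).choose i * (j + k).choose j = (j + (i + k)).choose j * (i + k).choose i := by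
  have hi : i + (j + k) - i = j + k := by omega
  have hj : j + (i + k) - j = i + k := by omega
  calc
    _ = (i + (j + k)).choose (i + j) * (i + j).choose i := by
      rw [Nat.choose_mul (Nat.le_add_right i j), hi, Nat.add_sub_cancel_left]
    _ = (j + (i + k)).choose (i + j) * (i + j).choose j := by
      rw [Nat.choose_symm_add, add_left_comm]
    _ = _ := by rw [Nat.choose_mul (Nat.le_add_left j i), hj, Nat.add_sub_cancel]

lemma sum_antidiagonal_choose_smul_sum_antidiagonal_choose_smul_left_comm {M : Type*}
    [AddCommMonoid M] (n : ℕ) (f : ℕ → ℕ → ℕ → M) :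
    ∑ p ∈ antidiagonal n, n.choose p.1 • ∑ q ∈ antidiagonal p.2, p.2.choose q.1 • f p.1 q.1 q.2 =
      ∑ p ∈ antidiagonal n,
        n.choose p.1 • ∑ q ∈ antidiagonal p.2, p.2.choose q.1 • f q.1 p.1 q.2 := by
  have htrinomial (g : ℕ → ℕ → ℕ → M) :
      ∑ p ∈ antidiagonal n, n.choose p.1 • ∑ q ∈ antidiagonal p.2, p.2.choose q.1 • g p.1 q.1 q.2 =
        ∑ p ∈ antidiagonal n, ∑ q ∈ antidiagonal p.2,
          ((p.1 + (q.1 + q.2)).choose p.1 * (q.1 + q.2).choose q.1) • g p.1 q.1 q.2 := by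
    refine sum_congr rfl fun p hp => ?_
    rw [smul_sum]
    refine sum_congr rfl fun q hq => ?_
    rw [smul_smul, mem_antidiagonal.1 hq, mem_antidiagonal.1 hp]
  rw [htrinomial f, htrinomial fun i j k => f j i k,
    sum_antidiagonal_antidiagonal_left_comm n fun i j k =>
      ((i + (j + k)).choose i * (j + k).choose j) • f i j k]
  simp only [choose_add_mul_choose_add_left_comm]

end AntidiagonalSums

section AbelIdentity

variable {R : Type*} [CommRing R]

lemma sum_antidiagonal_neg_one_pow_mul_choose_mul_add_pow_eq_zero {d n : ℕ} (h : d < n) (x : R) :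
    ∑ p ∈ antidiagonal n, (-1) ^ p.2 * (n.choose p.1 : R) * (x + p.1) ^ d = 0 := by
  have hdiff := congrFun (fwdDiff_iter_pow_eq_zero_of_lt (R := R) h) x
  rw [fwdDiff_iter_eq_sum_shift] at hdiff
  simpa [Nat.sum_antidiagonal_eq_sum_range_succ_mk] using hdiff

lemma sum_antidiagonal_choose_mul_abelEval_mul_neg_pow_eq_zero (n : ℕ) (x : R) :
    ∑ p ∈ antidiagonal (n + 1),
      ((n + 1).choose p.1 : R) * abelEval p.1 x * (-(x + p.1)) ^ p.2 = 0 := by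
  calc
    _ = ∑ p ∈ antidiagonal (n + 1),
          x * ((-1) ^ p.2 * ((n + 1).choose p.1 : R) * (x + p.1) ^ n) := by
      refine sum_congr rfl fun p hp => ?_
      rw [neg_pow]
      linear_combination
        (-1) ^ p.2 * ((n + 1).choose p.1 : R) * abelEval_mul_pow (mem_antidiagonal.1 hp) x
    _ = 0 := by
      rw [← mul_sum, sum_antidiagonal_neg_one_pow_mul_choose_mul_add_pow_eq_zero n.lt_succ_self,
        mul_zero]

theorem sum_antidiagonal_choose_mul_abelEval_mul_add_pow (n : ℕ) (x y : R) :
    ∑ p ∈ antidiagonal n, (n.choose p.1 : R) * abelEval p.1 x * (y + p.2) ^ p.2 =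
      (x + y + n) ^ n := by
  set z := x + y + n with hz
  have hexpand : ∀ p ∈ antidiagonal n,
      (n.choose p.1 : R) * abelEval p.1 x * (y + p.2) ^ p.2 =
        n.choose p.1 • ∑ q ∈ antidiagonal p.2,
          p.2.choose q.1 • (abelEval p.1 x * (z ^ q.1 * (-(x + p.1)) ^ q.2)) := by
    intro p hp
    have hsub : y + p.2 = z + -(x + p.1) := by
      rw [hz, ← mem_antidiagonal.1 hp]
      push_cast
      ring
    rw [hsub, (Commute.all _ _).add_pow', nsmul_eq_mul, mul_assoc, mul_sum]
    simp only [mul_smul_comm]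
  have hcollect : ∀ p ∈ antidiagonal n,
      n.choose p.1 • ∑ q ∈ antidiagonal p.2,
          p.2.choose q.1 • (abelEval q.1 x * (z ^ p.1 * (-(x + q.1)) ^ q.2)) =
        n.choose p.1 • (z ^ p.1 * ∑ q ∈ antidiagonal p.2,
          (p.2.choose q.1 : R) * abelEval q.1 x * (-(x + q.1)) ^ q.2) := by
    intro p _
    rw [mul_sum]
    congr! 2 with q
    rw [nsmul_eq_mul]
    ring
  rw [sum_congr rfl hexpand,
    sum_antidiagonal_choose_smul_sum_antidiagonal_choose_smul_left_comm n fun i j k =>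
      abelEval i x * (z ^ j * (-(x + i)) ^ k),
    sum_congr rfl hcollect, sum_eq_single_of_mem (n, 0) (by simp)]
  · simp
  · rintro ⟨j, _ | m⟩ hp hne
    · simp_all
    · rw [sum_antidiagonal_choose_mul_abelEval_mul_neg_pow_eq_zero, mul_zero, smul_zero]

lemma abelEval_succ_eq_sub (n : ℕ) (x : R) :
    abelEval (n + 1) x =
      (x + (n + 1 : ℕ)) ^ (n + 1) - (n + 1 : ℕ) * (x + (n + 1 : ℕ)) ^ n := by
  rw [abelEval_succ]
  ring

theorem abelEval_add (n : ℕ) (x y : R) :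
    abelEval n (x + y) =
      ∑ p ∈ antidiagonal n, (n.choose p.1 : R) * abelEval p.1 x * abelEval p.2 y := by
  cases n with
  | zero => simp
  | succ n =>
    have habsorb : ∀ p ∈ antidiagonal n,
        ((n + 1).choose p.1 : R) * abelEval p.1 x * abelEval (p.2 + 1) y =
          ((n + 1).choose p.1 : R) * abelEval p.1 x * (y + (p.2 + 1 : ℕ)) ^ (p.2 + 1) -
            (n + 1 : ℕ) * ((n.choose p.1 : R) * abelEval p.1 x * (y + 1 + p.2) ^ p.2) := by
      intro p hp
      have hchoose : n.choose p.1 * (n + 1) = (n + 1).choose p.1 * (p.2 + 1) := by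
        rw [Nat.choose_mul_succ_eq, ← mem_antidiagonal.1 hp]
        congr 1
        omega
      have hchoose' := congrArg (Nat.cast (R := R)) hchoose
      rw [abelEval_succ_eq_sub]
      push_cast at hchoose' ⊢
      linear_combination abelEval p.1 x * (y + (p.2 + 1)) ^ p.2 * hchoose'
    have habel := sum_antidiagonal_choose_mul_abelEval_mul_add_pow (n + 1) x y
    rw [Nat.sum_antidiagonal_succ'] at habel ⊢
    rw [sum_congr rfl habsorb, sum_sub_distrib, ← mul_sum,
      sum_antidiagonal_choose_mul_abelEval_mul_add_pow n x (y + 1), abelEval_succ_eq_sub, ← habel]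
    push_cast
    simp only [pow_zero, abelEval_zero]
    ring

lemma sum_antidiagonal_choose_mul_abelEval_mul_abelEval_neg (n : ℕ) (x : R) :
    ∑ p ∈ antidiagonal (n + 1),
      ((n + 1).choose p.1 : R) * abelEval p.1 x * abelEval p.2 (-x) = 0 := by
  rw [← abelEval_add, add_neg_cancel, abelEval_succ, zero_mul]

end AbelIdentity

section Composition

lemma sum_composition_zero {M : Type*} [AddCommMonoid M] (F : List ℕ → M) :
    ∑ I : Composition 0, F I.blocks = F [] := by
  have hblocks (I : Composition 0) : I.blocks = [] := I.blocks_eq_nil.2 rfl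
  simp [hblocks, composition_card]

lemma sum_composition_succ {M : Type*} [AddCommMonoid M] (n : ℕ) (F : List ℕ → M) :
    ∑ I : Composition (n + 1), F I.blocks =
      ∑ p ∈ antidiagonal n, ∑ I : Composition p.2, F ((p.1 + 1) :: I.blocks) := by
  rw [sum_sigma']
  symm
  refine sum_bij (fun s hs => ⟨(s.1.1 + 1) :: s.2.blocks, ?_, ?_⟩) ?_ ?_ ?_ ?_
  · intro i hi
    rcases List.mem_cons.1 hi with rfl | hi
    · omega
    · exact s.2.blocks_pos hi
  · have := mem_antidiagonal.1 (mem_sigma.1 hs).1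
    rw [List.sum_cons, s.2.blocks_sum]
    omega
  · simp
  · rintro ⟨⟨i, k⟩, I⟩ hI ⟨⟨j, l⟩, J⟩ hJ h
    have hblocks := congrArg Composition.blocks h
    simp only [List.cons.injEq, add_left_inj] at hblocks
    obtain ⟨rfl, hblocks⟩ := hblocks
    obtain rfl : k = l := by
      simp only [mem_sigma, mem_antidiagonal, mem_univ, and_true] at hI hJ
      omega
    rw [Composition.ext hblocks]
  · rintro ⟨_ | ⟨b, l⟩, hpos, hsum⟩ _
    · simp at hsum
    · have hb : 0 < b := hpos List.mem_cons_self
      rw [List.sum_cons] at hsum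
      refine ⟨⟨(b - 1, l.sum), ⟨l, fun h => hpos (List.mem_cons_of_mem _ h), rfl⟩⟩, ?_, ?_⟩
      · exact mem_sigma.2 ⟨mem_antidiagonal.2 (show b - 1 + l.sum = n by omega), mem_univ _⟩
      · ext1
        simp [Nat.sub_add_cancel hb]
  · intros
    rfl

lemma multinomial_nil : ([] : List ℕ).multinomial = 1 := by
  simp [List.multinomial, Finsupp.multinomial]

lemma prod_map_factorial_mul_multinomial (l : List ℕ) :
    (l.map Nat.factorial).prod * l.multinomial = l.sum ! := by
  induction l with
  | nil => simp [multinomial_nil]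
  | cons a l ih =>
    rw [List.multinomial_cons, List.map_cons, List.prod_cons, List.sum_cons,
      ← Nat.add_choose_mul_factorial_mul_factorial, ← ih, Nat.choose_symm_add]
    ring

lemma factorial_div_prod_map_factorial_blocks {n : ℕ} (I : Composition n) :
    n ! / (I.blocks.map Nat.factorial).prod = I.blocks.multinomial := by
  have h := prod_map_factorial_mul_multinomial I.blocks
  rw [I.blocks_sum] at h
  exact Nat.div_eq_of_eq_mul_right
    (Nat.pos_of_mul_pos_right (h ▸ n.factorial_pos)) h.symm

variable {R : Type*} [CommRing R]

/- In terms of exponential generating functions: if `a` and `b` have constant term `1` and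
`a * b = 1`, then `b = ∑ r, (-1) ^ r * (a - 1) ^ r`. -/
theorem sum_composition_neg_one_pow_mul_multinomial_mul_prod {a b : ℕ → R} (ha : a 0 = 1)
    (hb : b 0 = 1)
    (hab : ∀ n, ∑ p ∈ antidiagonal (n + 1), ((n + 1).choose p.1 : R) * a p.1 * b p.2 = 0)
    (n : ℕ) :
    ∑ I : Composition n, (-1) ^ I.blocks.length * (I.blocks.multinomial : R) *
      (I.blocks.map a).prod = b n := by
  induction n using Nat.strong_induction_on with
  | _ n ih =>
    cases n with
    | zero =>
      rw [sum_composition_zero fun l => (-1) ^ l.length * (l.multinomial : R) * (l.map a).prod]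
      simp [multinomial_nil, hb]
    | succ n =>
      have hblock : ∀ p ∈ antidiagonal n,
          ∑ I : Composition p.2, (-1) ^ ((p.1 + 1) :: I.blocks).length *
              (((p.1 + 1) :: I.blocks).multinomial : R) * (((p.1 + 1) :: I.blocks).map a).prod =
            -(((n + 1).choose (p.1 + 1) : R) * a (p.1 + 1) * b p.2) := by
        intro p hp
        have hsum : p.1 + 1 + p.2 = n + 1 := by
          rw [← mem_antidiagonal.1 hp]
          ring
        rw [← ih p.2 (by omega), mul_sum, ← sum_neg_distrib]
        refine sum_congr rfl fun I _ => ?_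
        rw [List.multinomial_cons, I.blocks_sum, hsum, List.length_cons, List.map_cons,
          List.prod_cons]
        push_cast
        ring
      have hconv := hab n
      rw [Nat.sum_antidiagonal_succ, ha, Nat.choose_zero_right, Nat.cast_one, one_mul,
        one_mul] at hconv
      rw [sum_composition_succ n fun l => (-1) ^ l.length * (l.multinomial : R) * (l.map a).prod,
        sum_congr rfl hblock, sum_neg_distrib]
      exact (eq_neg_of_add_eq_zero_left hconv).symm

end Composition

theorem alternating_sum_over_compositions_eq_general {R : Type*} [CommRing R] (n : ℕ) (hn : 1 ≤ n)
    (x : R) :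
    x * (n - x) ^ (n - 1) =
      ∑ I : Composition n,
        (-1) ^ (I.length - 1) * ((n ! / (I.blocks.map Nat.factorial).prod : ℕ) : R) *
          (I.blocks.map fun i : ℕ => x * (x + i) ^ (i - 1)).prod := by
  have hneg := sum_composition_neg_one_pow_mul_multinomial_mul_prod (a := (abelEval · x))
    (b := (abelEval · (-x))) rfl rfl (sum_antidiagonal_choose_mul_abelEval_mul_abelEval_neg · x) n
  rw [abelEval_of_pos hn, neg_mul, neg_add_eq_sub, ← neg_eq_iff_eq_neg, ← sum_neg_distrib] at hneg
  rw [← hneg]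
  refine sum_congr rfl fun I _ => ?_
  have hlength : I.blocks.length = I.length - 1 + 1 :=
    (Nat.sub_add_cancel (I.length_pos_of_pos hn)).symm
  have hmap : (I.blocks.map fun i : ℕ => x * (x + i) ^ (i - 1)) = I.blocks.map (abelEval · x) :=
    List.map_congr_left fun i hi => (abelEval_of_pos (I.blocks_pos hi) x).symm
  rw [factorial_div_prod_map_factorial_blocks, hmap, hlength]
  ring

theorem alternating_sum_over_compositions_eq (n : ℕ) (hn : 1 ≤ n) :
    ((n : ℤ) - 1) ^ (n - 1) =
      ∑ I : Composition n,
        (-1 : ℤ) ^ (I.length - 1) *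
          ((Nat.factorial n / (I.blocks.map Nat.factorial).prod : ℕ) : ℤ) *
          (((I.blocks.map fun i => (i + 1) ^ (i - 1)).prod : ℕ) : ℤ) := by
  simpa [Nat.cast_list_prod, Function.comp_def, add_comm] using
    alternating_sum_over_compositions_eq_general n hn (1 : ℤ)
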